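/- Let n ≥ 1, C ≥ 1, let K be a symmetric positive semidefinite real n×n matrix, λ > 0, A = K(K + λI_n)⁻¹, and let Y, Ỹ ∈ ℝ^{n×C} be the clean and noisy target matrices. For each i with A_{ii} ≠ 1, let f̃^{-i}(x_i) ∈ ℝ^C be the leave-one-out prediction of the model trained on the noisy targets, with k-th component (k^{(i)})ᵀ(K^{(i)} + λI_{n-1})⁻¹Ỹ^{(i)}_{•k}, and let Δ̃^λ_{ik} = (Ỹ_{ik} − (AỸ)_{ik})/(1 − A_{ii}). Then the residual of this model against the clean label satisfies Y_{ik} − f̃^{-i}_k(x_i) = (Y_{ik} − Ỹ_{ik}) + Δ̃^λ_{ik} for all k; consequently the leave-one-out loss of the model trained on Ỹ but evaluated on Y equals (1/n) Σ_{i=1}^n Σ_{k=1}^C (Δ̃^λ_{ik} + Y_{ik} − Ỹ_{ik})². -/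

import Mathlib

open Matrix Finset

/-!
Put `M = K + λ • 1` and `t = (M⁻¹ y) i / M⁻¹ i i`. Lowering the `i`-th target by `t` makes the
`i`-th coordinate of the dual solution `v = M⁻¹ (y - t eᵢ)` vanish. Hence `v`, restricted to the
other points, solves the system with point `i` deleted, which is nonsingular because `M⁻¹ i i ≠ 0`,
and row `i` of `M v = y - t eᵢ` says that the leave-one-out prediction is `y i - t`. Finally
`1 - K M⁻¹ = λ • M⁻¹` turns `t` into the in-sample residual divided by `1 - A i i`.
-/

theorem submatrix_mulVec_comp_of_eq_zero_off_range {l m n o α : Type*} [Fintype n] [Fintype o]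
    [NonUnitalNonAssocSemiring α] (M : Matrix m n α) (r : l → m) {e : o → n}
    (he : Function.Injective e) {v : n → α} (hv : ∀ j ∉ Set.range e, v j = 0) :
    M.submatrix r e *ᵥ (v ∘ e) = (M *ᵥ v) ∘ r :=
  funext fun a => Fintype.sum_of_injective e he _ (fun j => M (r a) j * v j)
    (fun j hj => by rw [hv j hj, mul_zero]) fun _ => rfl

theorem submatrix_ne_mulVec_comp_val {l m n α : Type*} [Fintype n] [DecidableEq n]
    [NonUnitalNonAssocSemiring α] (M : Matrix m n α) (r : l → m) {i : n} {v : n → α}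
    (hv : v i = 0) :
    M.submatrix r (Subtype.val : {j // j ≠ i} → n) *ᵥ (v ∘ Subtype.val) = (M *ᵥ v) ∘ r := by
  refine submatrix_mulVec_comp_of_eq_zero_off_range M r Subtype.val_injective fun j hj => ?_
  obtain rfl : j = i := by simpa using hj
  exact hv

section DeletedIndex

variable {n 𝕜 : Type*} [Fintype n] [DecidableEq n] [Field 𝕜] {M : Matrix n n 𝕜} {i : n}

theorem eq_zero_of_apply_eq_zero_of_mulVec_apply_eq_zero (hM : IsUnit M) (hi : M⁻¹ i i ≠ 0)
    {v : n → 𝕜} (hvi : v i = 0) (hMv : ∀ j ≠ i, (M *ᵥ v) j = 0) : v = 0 := by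
  have hMv_single : M *ᵥ v = Pi.single i ((M *ᵥ v) i) := by
    ext j
    obtain rfl | hj := eq_or_ne j i
    · rw [Pi.single_eq_same]
    · rw [hMv j hj, Pi.single_eq_of_ne hj]
  have hv : v = M⁻¹ *ᵥ Pi.single i ((M *ᵥ v) i) := by
    rw [← hMv_single, mulVec_mulVec, nonsing_inv_mul _ ((isUnit_iff_isUnit_det M).mp hM),
      one_mulVec]
  have hMvi : (M *ᵥ v) i = 0 := by
    have hvi' := congrFun hv i
    rw [hvi, mulVec_single] at hvi'
    simpa [hi] using hvi'.symm
  rw [hv, hMvi, Pi.single_zero, mulVec_zero]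

theorem isUnit_submatrix_ne_of_inv_apply_ne_zero (hM : IsUnit M) (hi : M⁻¹ i i ≠ 0) :
    IsUnit (M.submatrix (Subtype.val : {j // j ≠ i} → n) (Subtype.val : {j // j ≠ i} → n)) := by
  rw [← mulVec_injective_iff_isUnit, ← coe_mulVecLin, injective_iff_map_eq_zero]
  intro w hw
  set v : n → 𝕜 := Function.extend Subtype.val w 0
  have hvw : v ∘ Subtype.val = w := Function.extend_comp Subtype.val_injective w 0
  have hvi : v i = 0 := Function.extend_apply' _ _ _ (by simp)
  have hMv : ∀ j ≠ i, (M *ᵥ v) j = 0 := fun j hj => by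
    rw [mulVecLin_apply, ← hvw, submatrix_ne_mulVec_comp_val M _ hvi] at hw
    exact congrFun hw ⟨j, hj⟩
  rw [← hvw, eq_zero_of_apply_eq_zero_of_mulVec_apply_eq_zero hM hi hvi hMv]
  rfl

theorem row_dotProduct_inv_submatrix_ne_mulVec (hM : IsUnit M) (hi : M⁻¹ i i ≠ 0) (y : n → 𝕜) :
    (M.row i ∘ Subtype.val) ⬝ᵥ
        ((M.submatrix (Subtype.val : {j // j ≠ i} → n) (Subtype.val : {j // j ≠ i} → n))⁻¹ *ᵥ
          (y ∘ Subtype.val)) =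
      y i - (M⁻¹ *ᵥ y) i / M⁻¹ i i := by
  set N := M.submatrix (Subtype.val : {j // j ≠ i} → n) (Subtype.val : {j // j ≠ i} → n)
  set t := (M⁻¹ *ᵥ y) i / M⁻¹ i i with ht
  set v := M⁻¹ *ᵥ (y - t • Pi.single i 1) with hv
  have hvi : v i = 0 := by
    rw [hv, mulVec_sub, mulVec_smul, mulVec_single_one, Pi.sub_apply, Pi.smul_apply, col_apply,
      smul_eq_mul, ht, div_mul_cancel₀ _ hi, sub_self]
  have hMv : M *ᵥ v = y - t • Pi.single i 1 := by
    rw [hv, mulVec_mulVec, mul_nonsing_inv _ ((isUnit_iff_isUnit_det M).mp hM), one_mulVec]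
  have hNv : N *ᵥ (v ∘ Subtype.val) = y ∘ Subtype.val := by
    rw [submatrix_ne_mulVec_comp_val M _ hvi, hMv]
    ext j
    simp [j.2]
  have hNy : N⁻¹ *ᵥ (y ∘ Subtype.val) = v ∘ Subtype.val := by
    have hN : IsUnit N := isUnit_submatrix_ne_of_inv_apply_ne_zero hM hi
    rw [← hNv, mulVec_mulVec, nonsing_inv_mul _ ((isUnit_iff_isUnit_det N).mp hN), one_mulVec]
  calc (M.row i ∘ Subtype.val) ⬝ᵥ (N⁻¹ *ᵥ (y ∘ Subtype.val))
      = (M *ᵥ v) i := by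
        rw [hNy]
        exact congrFun (submatrix_ne_mulVec_comp_val M id hvi) i
    _ = y i - t := by simp [hMv]

end DeletedIndex

section KernelRidge

variable {n : Type*} [Fintype n] [DecidableEq n]

/-- The smoother `K (K + λ • 1)⁻¹` of kernel ridge regression, which maps the training targets
to the in-sample predictions. It is the junk value `0` when `K + λ • 1` is not invertible. -/
noncomputable def ridgeSmoother {R : Type*} [CommRing R] (K : Matrix n n R) (lam : R) :
    Matrix n n R :=
  K * (K + lam • (1 : Matrix n n R))⁻¹

/-- The prediction at the `i`-th point of kernel ridge regression trained on the targets `y` of all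
the other points, which are indexed by the subtype `{j // j ≠ i}`. It is the junk value `0` when the
regularized kernel matrix of those points is not invertible. -/
noncomputable def looPrediction {R : Type*} [CommRing R] (K : Matrix n n R) (lam : R) (y : n → R)
    (i : n) : R :=
  (K.row i ∘ Subtype.val) ⬝ᵥ
    ((K.submatrix (Subtype.val : {j // j ≠ i} → n) Subtype.val
      + lam • (1 : Matrix {j // j ≠ i} {j // j ≠ i} R))⁻¹ *ᵥ (y ∘ Subtype.val))

theorem looPrediction_eq_sum {R : Type*} [CommRing R] (K : Matrix n n R) (lam : R) (y : n → R)
    (i : n) :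
    looPrediction K lam y i = ∑ a : {j // j ≠ i}, ∑ b : {j // j ≠ i},
      K i a * (K.submatrix (fun a : {j // j ≠ i} => a.val) (fun b : {j // j ≠ i} => b.val)
        + lam • (1 : Matrix {j // j ≠ i} {j // j ≠ i} R))⁻¹ a b * y b := by
  simp only [mul_assoc, ← mul_sum]
  rfl

theorem one_sub_ridgeSmoother {R : Type*} [CommRing R] {K : Matrix n n R} {lam : R}
    (h : IsUnit (K + lam • (1 : Matrix n n R))) :
    1 - ridgeSmoother K lam = lam • (K + lam • (1 : Matrix n n R))⁻¹ := by
  have h_mul_inv := mul_nonsing_inv _ ((isUnit_iff_isUnit_det _).mp h)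
  rw [add_mul, smul_mul_assoc, one_mul] at h_mul_inv
  exact sub_eq_of_eq_add' h_mul_inv.symm

variable {𝕜 : Type*} [Field 𝕜] {K : Matrix n n 𝕜} {lam : 𝕜}

theorem looPrediction_eq_sub_inv_mulVec_div (h : IsUnit (K + lam • (1 : Matrix n n 𝕜))) {i : n}
    (hi : (K + lam • (1 : Matrix n n 𝕜))⁻¹ i i ≠ 0) (y : n → 𝕜) :
    looPrediction K lam y i = y i -
      ((K + lam • (1 : Matrix n n 𝕜))⁻¹ *ᵥ y) i / (K + lam • (1 : Matrix n n 𝕜))⁻¹ i i := by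
  have h_row : (K + lam • (1 : Matrix n n 𝕜)).row i ∘ (Subtype.val : {j // j ≠ i} → n) =
      K.row i ∘ Subtype.val := by
    ext a
    simp [one_apply_ne a.2.symm]
  have h_submatrix : (K + lam • (1 : Matrix n n 𝕜)).submatrix
      (Subtype.val : {j // j ≠ i} → n) (Subtype.val : {j // j ≠ i} → n) =
      K.submatrix Subtype.val Subtype.val + lam • (1 : Matrix {j // j ≠ i} {j // j ≠ i} 𝕜) := by
    rw [← submatrix_one (α := 𝕜) (Subtype.val : {j // j ≠ i} → n) Subtype.val_injective]
    rfl
  rw [← row_dotProduct_inv_submatrix_ne_mulVec h hi, h_row, h_submatrix, looPrediction]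

theorem sub_looPrediction (h : IsUnit (K + lam • (1 : Matrix n n 𝕜))) {i : n}
    (hi : ridgeSmoother K lam i i ≠ 1) (y : n → 𝕜) :
    y i - looPrediction K lam y i =
      (y i - (ridgeSmoother K lam *ᵥ y) i) / (1 - ridgeSmoother K lam i i) := by
  set B := (K + lam • (1 : Matrix n n 𝕜))⁻¹
  have h_residual : y i - (ridgeSmoother K lam *ᵥ y) i = lam * (B *ᵥ y) i := by
    have := congrFun (congrArg (· *ᵥ y) (one_sub_ridgeSmoother h)) i
    simpa only [sub_mulVec, one_mulVec, smul_mulVec, Pi.sub_apply, Pi.smul_apply, smul_eq_mul]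
      using this
  have h_leverage : 1 - ridgeSmoother K lam i i = lam * B i i := by
    simpa only [Matrix.sub_apply, one_apply_eq, Matrix.smul_apply, smul_eq_mul]
      using congrFun₂ (one_sub_ridgeSmoother h) i i
  obtain ⟨hlam, hBi⟩ : lam ≠ 0 ∧ B i i ≠ 0 := by
    rw [← mul_ne_zero_iff, ← h_leverage]
    exact sub_ne_zero.mpr hi.symm
  rw [looPrediction_eq_sub_inv_mulVec_div h hBi, sub_sub_cancel, h_residual, h_leverage,
    mul_div_mul_left _ _ hlam]

theorem loo_loss_noisy_labels_general {c : Type*} [Fintype c]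
    (h : IsUnit (K + lam • (1 : Matrix n n 𝕜))) (Y Ytil : Matrix n c 𝕜) :
    (∀ i, ridgeSmoother K lam i i ≠ 1 → ∀ k,
      Y i k - looPrediction K lam (Ytil.col k) i = (Y i k - Ytil i k) +
        (Ytil i k - (ridgeSmoother K lam * Ytil) i k) / (1 - ridgeSmoother K lam i i)) ∧
    ((∀ i, ridgeSmoother K lam i i ≠ 1) →
      ∑ i, ∑ k, (Y i k - looPrediction K lam (Ytil.col k) i) ^ 2 =
      ∑ i, ∑ k, ((Ytil i k - (ridgeSmoother K lam * Ytil) i k) / (1 - ridgeSmoother K lam i i)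
        + Y i k - Ytil i k) ^ 2) := by
  have h_loo : ∀ i, ridgeSmoother K lam i i ≠ 1 → ∀ k,
      (Ytil i k - (ridgeSmoother K lam * Ytil) i k) / (1 - ridgeSmoother K lam i i) =
        Ytil i k - looPrediction K lam (Ytil.col k) i :=
    fun i hi k => (sub_looPrediction h hi (Ytil.col k)).symm
  refine ⟨fun i hi k => ?_, fun hne => sum_congr rfl fun i _ => sum_congr rfl fun k _ => ?_⟩
  · rw [h_loo i hi k, sub_add_sub_cancel]
  · rw [h_loo i (hne i) k, add_sub_right_comm, sub_sub_cancel_left, neg_add_eq_sub]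

end KernelRidge

/-- **Leave-one-out loss for a model trained on noisy targets and evaluated on clean ones.**
With smoother `A = K (K + lam I)⁻¹`, noisy targets `Ỹ`, leave-one-out predictions
`f̃ i k = (k⁽ⁱ⁾)ᵀ (K⁽ⁱ⁾ + lam I)⁻¹ Ỹ⁽ⁱ⁾_{•k}` and residuals
`Δ̃ i k = (Ỹ i k - (A Ỹ) i k)/(1 - A i i)`, the residual against the clean label
satisfies `Y i k - f̃ i k = (Y i k - Ỹ i k) + Δ̃ i k`, hence the LOO loss of the
model trained on `Ỹ` but evaluated on `Y` equals
`(1/n) ∑ i ∑ k (Δ̃ i k + Y i k - Ỹ i k)²`. -/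
theorem loo_loss_noisy_labels
    (n C : ℕ) (hn : 1 ≤ n) (hC : 1 ≤ C)
    (K : Matrix (Fin n) (Fin n) ℝ) (hK : K.PosSemidef)
    (lam : ℝ) (hlam : 0 < lam)
    (Y Ytil : Matrix (Fin n) (Fin C) ℝ)
    (A : Matrix (Fin n) (Fin n) ℝ)
    (hA : A = K * (K + lam • (1 : Matrix (Fin n) (Fin n) ℝ))⁻¹)
    (ftil : Fin n → Fin C → ℝ)
    (hftil : ∀ (i : Fin n) (k : Fin C),
      ftil i k = ∑ a : {j : Fin n // j ≠ i}, ∑ b : {j : Fin n // j ≠ i},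
        K i a.val *
          ((K.submatrix (fun a : {j : Fin n // j ≠ i} => a.val)
              (fun b : {j : Fin n // j ≠ i} => b.val)
            + lam • (1 : Matrix {j : Fin n // j ≠ i} {j : Fin n // j ≠ i} ℝ))⁻¹ a b) *
          Ytil b.val k)
    (Δtil : Fin n → Fin C → ℝ)
    (hΔtil : ∀ (i : Fin n) (k : Fin C),
      Δtil i k = (Ytil i k - (A * Ytil) i k) / (1 - A i i)) :
    (∀ i : Fin n, A i i ≠ 1 → ∀ k : Fin C,
        Y i k - ftil i k = (Y i k - Ytil i k) + Δtil i k) ∧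
    ((∀ i : Fin n, A i i ≠ 1) →
      (1 / (n : ℝ)) * ∑ i : Fin n, ∑ k : Fin C, (Y i k - ftil i k) ^ 2 =
      (1 / (n : ℝ)) * ∑ i : Fin n, ∑ k : Fin C,
        (Δtil i k + Y i k - Ytil i k) ^ 2) := by
  obtain ⟨h_residual, h_loss⟩ := loo_loss_noisy_labels_general
    (PosDef.posSemidef_add hK (PosDef.one.smul hlam)).isUnit Y Ytil
  simp only [hA, hΔtil, hftil]
  simp only [looPrediction_eq_sum] at h_residual h_loss
  exact ⟨h_residual, fun hne => congrArg (1 / (n : ℝ) * ·) (h_loss hne)⟩
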